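/- Let S be a regular semigroup and let R be a regular subsemigroup of T(S) containing the image of the embedding φ : s ↦ (s,s,σ). Then for each Green relation 𝓚 ∈ {𝓗, 𝓛, 𝓡, 𝓓, 𝓙}, the restriction of 𝓚 on T(S) to R equals the relation 𝓚 computed in R; and the restriction to R of the natural partial order of T(S) equals the natural partial order of R. -/

import Mathlib

namespace SemibandEmbed

/-- The two-element right-zero semigroup `R₂ = {σ, τ}`. -/
inductive R2 : Type where
  | σ : R2
  | τ : R2
  deriving DecidableEq

section GreenDefs

variable {S : Type*} [Semigroup S]

/-- Green's relation 𝓡 : `a 𝓡 b` iff `a S¹ = b S¹` (inside `S¹ = WithOne S`). -/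
def greenR (a b : S) : Prop :=
  {x : WithOne S | ∃ u : WithOne S, x = (a : WithOne S) * u} =
    {x : WithOne S | ∃ u : WithOne S, x = (b : WithOne S) * u}

/-- Green's relation 𝓛 : `a 𝓛 b` iff `S¹ a = S¹ b`. -/
def greenL (a b : S) : Prop :=
  {x : WithOne S | ∃ u : WithOne S, x = u * (a : WithOne S)} =
    {x : WithOne S | ∃ u : WithOne S, x = u * (b : WithOne S)}

/-- Green's relation 𝓗 = 𝓛 ∩ 𝓡. -/
def greenH (a b : S) : Prop := greenL a b ∧ greenR a b

/-- Green's relation 𝓓 : `a 𝓓 b` iff `a 𝓡 c` and `c 𝓛 b` for some `c`. -/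
def greenD (a b : S) : Prop := ∃ c : S, greenR a c ∧ greenL c b

/-- Green's relation 𝓙 : `a 𝓙 b` iff `S¹ a S¹ = S¹ b S¹`. -/
def greenJ (a b : S) : Prop :=
  {x : WithOne S | ∃ u v : WithOne S, x = u * (a : WithOne S) * v} =
    {x : WithOne S | ∃ u v : WithOne S, x = u * (b : WithOne S) * v}

/-- Mitsch's natural partial order on a semigroup. -/
def natLe (a b : S) : Prop := ∃ x y : S, a = x * b ∧ a = b * y ∧ a = a * y

end GreenDefs

/-- A semigroup is idempotent covered if every element `s` satisfies `s e = s = f s`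
for some idempotents `e`, `f`. -/
def IdemCovered (S : Type*) [Semigroup S] : Prop :=
  ∀ s : S, ∃ e f : S, IsIdempotentElem e ∧ IsIdempotentElem f ∧ s * e = s ∧ f * s = s

/-- A semigroup is regular if every `a` satisfies `a x a = a` for some `x`. -/
def IsRegularSemigroup (S : Type*) [Semigroup S] : Prop :=
  ∀ a : S, ∃ x : S, a * x * a = a

/-- A semigroup is periodic if every element generates a finite monogenic subsemigroup,
i.e. `aᵐ = aⁿ` for some `0 < m < n` (powers computed in `S¹ = WithOne S`). -/
def IsPeriodic (S : Type*) [Semigroup S] : Prop :=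
  ∀ a : S, ∃ m n : ℕ, 0 < m ∧ m < n ∧ (a : WithOne S) ^ m = (a : WithOne S) ^ n

/-- `𝓗` is a left congruence. -/
def IsLeftCongH (S : Type*) [Semigroup S] : Prop :=
  ∀ a b c : S, greenH a b → greenH (c * a) (c * b)

/-- `𝓗` is a right congruence. -/
def IsRightCongH (S : Type*) [Semigroup S] : Prop :=
  ∀ a b c : S, greenH a b → greenH (a * c) (b * c)

/-- A semigroup is completely regular if every element is 𝓗-related to an idempotent. -/
def IsCompletelyRegular (S : Type*) [Semigroup S] : Prop :=
  ∀ a : S, ∃ e : S, IsIdempotentElem e ∧ greenH a e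

section SemidirectProduct

variable {S : Type*} [Semigroup S]

/-- The multiplication of the semidirect product `(S × S) * R₂`:
`(t₁,s₁,σ)·(t₂,s₂,α) = (t₁s₂, s₁s₂, α)` and `(t₁,s₁,τ)·(t₂,s₂,α) = (t₁t₂, s₁t₂, α)`. -/
def sdMul (x y : S × S × R2) : S × S × R2 :=
  match x, y with
  | (t₁, s₁, R2.σ), (_, s₂, α) => (t₁ * s₂, s₁ * s₂, α)
  | (t₁, s₁, R2.τ), (t₂, _, α) => (t₁ * t₂, s₁ * t₂, α)

instance : Mul (S × S × R2) := ⟨sdMul⟩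

theorem sdMul_def (x y : S × S × R2) : x * y = sdMul x y := rfl

instance : Semigroup (S × S × R2) where
  mul_assoc x y z := by
    obtain ⟨t₁, s₁, α₁⟩ := x
    obtain ⟨t₂, s₂, α₂⟩ := y
    obtain ⟨t₃, s₃, α₃⟩ := z
    cases α₁ <;> cases α₂ <;> simp [sdMul_def, sdMul, mul_assoc]

/-- The set `E = {(s,t,α) ∈ E(T*R₂) : s ∈ S¹ t}`. -/
def Eset (S : Type*) [Semigroup S] : Set (S × S × R2) :=
  {x | IsIdempotentElem x ∧ ∃ a : WithOne S, (x.1 : WithOne S) = a * (x.2.1 : WithOne S)}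

/-- `T(S)`: the subsemigroup of the semidirect product generated by `E`. -/
def TS (S : Type*) [Semigroup S] : Subsemigroup (S × S × R2) :=
  Subsemigroup.closure (Eset S)

/-- Green's `𝓛` is a right congruence. -/
theorem greenL_mul_right {S : Type*} [Semigroup S] {a b : S} (hab : greenL a b) (c : S) :
    greenL (a * c) (b * c) := by
  have key : ∀ {a b : S}, greenL a b → ∀ x : WithOne S,
      (∃ u : WithOne S, x = u * ((a * c : S) : WithOne S)) →
      (∃ u : WithOne S, x = u * ((b * c : S) : WithOne S)) := by
    intro a b hab x hx
    obtain ⟨u, rfl⟩ := hx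
    have h1 : (u * (a : WithOne S)) ∈
        {x : WithOne S | ∃ u : WithOne S, x = u * (a : WithOne S)} := ⟨u, rfl⟩
    rw [greenL] at hab
    rw [hab] at h1
    obtain ⟨w, hw⟩ := h1
    refine ⟨w, ?_⟩
    rw [WithOne.coe_mul, WithOne.coe_mul, ← mul_assoc, hw, mul_assoc]
  have hab' : greenL b a := hab.symm
  ext x
  exact ⟨key hab x, key hab' x⟩

/-- `R(S) = {(s,t,α) ∈ T(S) : s 𝓛 t}`, a subsemigroup of `T(S)`. -/
def RS (S : Type*) [Semigroup S] : Subsemigroup ↥(TS S) where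
  carrier := {x | greenL (x : S × S × R2).1 (x : S × S × R2).2.1}
  mul_mem' := by
    rintro ⟨⟨s, t, α⟩, hx⟩ ⟨⟨u, v, β⟩, hy⟩ hxs hys
    simp only [Set.mem_setOf_eq] at hxs hys ⊢
    cases α <;> exact greenL_mul_right hxs _

end SemidirectProduct


section Helpers

theorem greenL_iff {T : Type*} [Semigroup T] (a b : T) :
    greenL a b ↔ (a = b ∨ ∃ u, a = u * b) ∧ (a = b ∨ ∃ u, b = u * a) := by
  constructor
  · intro h
    unfold greenL at h
    have h1 : (a : WithOne T) ∈ {x : WithOne T | ∃ u : WithOne T, x = u * (b : WithOne T)} := by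
      rw [← h]; exact ⟨1, (one_mul _).symm⟩
    have h2 : (b : WithOne T) ∈ {x : WithOne T | ∃ u : WithOne T, x = u * (a : WithOne T)} := by
      rw [h]; exact ⟨1, (one_mul _).symm⟩
    obtain ⟨u, hu⟩ := h1
    obtain ⟨v, hv⟩ := h2
    constructor
    · cases u with
      | one => rw [one_mul] at hu; exact Or.inl (WithOne.coe_inj.1 hu)
      | coe u => exact Or.inr ⟨u, by exact_mod_cast hu⟩
    · cases v with
      | one => rw [one_mul] at hv; exact Or.inl (WithOne.coe_inj.1 hv).symm
      | coe v => exact Or.inr ⟨v, by exact_mod_cast hv⟩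
  · rintro ⟨rfl | ⟨u, hu⟩, h⟩
    · rfl
    rcases h with rfl | ⟨v, hv⟩
    · rfl
    have hu' : (a : WithOne T) = u * b := by exact_mod_cast hu
    have hv' : (b : WithOne T) = v * a := by exact_mod_cast hv
    ext x
    constructor
    · rintro ⟨w, rfl⟩; exact ⟨w * u, by rw [mul_assoc, ← hu']⟩
    · rintro ⟨w, rfl⟩; exact ⟨w * v, by rw [mul_assoc, ← hv']⟩

theorem greenR_iff {T : Type*} [Semigroup T] (a b : T) :
    greenR a b ↔ (a = b ∨ ∃ u, a = b * u) ∧ (a = b ∨ ∃ u, b = a * u) := by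
  constructor
  · intro h
    unfold greenR at h
    have h1 : (a : WithOne T) ∈ {x : WithOne T | ∃ u : WithOne T, x = (b : WithOne T) * u} := by
      rw [← h]; exact ⟨1, (mul_one _).symm⟩
    have h2 : (b : WithOne T) ∈ {x : WithOne T | ∃ u : WithOne T, x = (a : WithOne T) * u} := by
      rw [h]; exact ⟨1, (mul_one _).symm⟩
    obtain ⟨u, hu⟩ := h1
    obtain ⟨v, hv⟩ := h2
    constructor
    · cases u with
      | one => rw [mul_one] at hu; exact Or.inl (WithOne.coe_inj.1 hu)
      | coe u => exact Or.inr ⟨u, by exact_mod_cast hu⟩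
    · cases v with
      | one => rw [mul_one] at hv; exact Or.inl (WithOne.coe_inj.1 hv).symm
      | coe v => exact Or.inr ⟨v, by exact_mod_cast hv⟩
  · rintro ⟨rfl | ⟨u, hu⟩, h⟩
    · rfl
    rcases h with rfl | ⟨v, hv⟩
    · rfl
    have hu' : (a : WithOne T) = b * u := by exact_mod_cast hu
    have hv' : (b : WithOne T) = a * v := by exact_mod_cast hv
    ext x
    constructor
    · rintro ⟨w, rfl⟩; exact ⟨u * w, by rw [← mul_assoc, ← hu']⟩
    · rintro ⟨w, rfl⟩; exact ⟨v * w, by rw [← mul_assoc, ← hv']⟩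

/-- One-sided form of the relation 𝓙, for regular elements. -/
theorem greenJ_iff {T : Type*} [Semigroup T] (a b : T) (ha : ∃ a', a * a' * a = a)
    (hb : ∃ b', b * b' * b = b) :
    greenJ a b ↔ (∃ u v, a = u * b * v) ∧ (∃ u v, b = u * a * v) := by
  have key : ∀ a b : T, (∃ a', a * a' * a = a) →
      (∃ u v : WithOne T, (a : WithOne T) = u * b * v) → ∃ u v, a = u * b * v := by
    rintro a b ⟨a', ha⟩ ⟨u, v, h⟩
    have e1 : ∃ u' : T, (u' : WithOne T) = ((a * a' : T) : WithOne T) * u := by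
      cases u with
      | one => exact ⟨a * a', (mul_one _).symm⟩
      | coe u => exact ⟨a * a' * u, by simp⟩
    have e2 : ∃ v' : T, (v' : WithOne T) = v * ((a' * a : T) : WithOne T) := by
      cases v with
      | one => exact ⟨a' * a, (one_mul _).symm⟩
      | coe v => exact ⟨v * (a' * a), by simp⟩
    obtain ⟨u', hu⟩ := e1
    obtain ⟨v', hv⟩ := e2
    refine ⟨u', v', ?_⟩
    rw [← WithOne.coe_inj, WithOne.coe_mul, WithOne.coe_mul, hu, hv]
    have : ((a * a' : T) : WithOne T) * u * b * (v * ((a' * a : T) : WithOne T))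
        = ((a * a' : T) : WithOne T) * (u * b * v) * ((a' * a : T) : WithOne T) := by
      simp only [mul_assoc]
    rw [this, ← h, ← WithOne.coe_mul, ← WithOne.coe_mul, WithOne.coe_inj, ha, ← mul_assoc, ha]
  constructor
  · intro h
    unfold greenJ at h
    constructor
    · apply key a b ha
      have : (a : WithOne T) ∈
          {x : WithOne T | ∃ u v : WithOne T, x = u * (b : WithOne T) * v} := by
        rw [← h]; exact ⟨1, 1, by simp⟩
      exact this
    · apply key b a hb
      have : (b : WithOne T) ∈
          {x : WithOne T | ∃ u v : WithOne T, x = u * (a : WithOne T) * v} := by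
        rw [h]; exact ⟨1, 1, by simp⟩
      exact this
  · rintro ⟨⟨u, v, h⟩, ⟨u', v', h'⟩⟩
    have hu : (a : WithOne T) = u * b * v := by exact_mod_cast h
    have hv : (b : WithOne T) = u' * a * v' := by exact_mod_cast h'
    ext x
    constructor
    · rintro ⟨w, z, rfl⟩; exact ⟨w * u, v * z, by rw [hu]; simp only [mul_assoc]⟩
    · rintro ⟨w, z, rfl⟩; exact ⟨w * u', v' * z, by rw [hv]; simp only [mul_assoc]⟩

variable {T : Type*} [Semigroup T] (R : Subsemigroup T)

theorem greenL_sub (hreg : ∀ x ∈ R, ∃ y ∈ R, x * y * x = x) (x y : R) :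
    greenL x y ↔ greenL (x : T) (y : T) := by
  have key : ∀ x y : R, (∃ u : T, (x : T) = u * y) → ∃ u : R, x = u * y := by
    rintro ⟨x, hx⟩ ⟨y, hy⟩ ⟨u, h⟩
    obtain ⟨y', hy', e⟩ := hreg y hy
    refine ⟨⟨x * y', R.mul_mem hx hy'⟩, Subtype.ext ?_⟩
    simp only at h
    change x = x * y' * y
    rw [h]; simp only [mul_assoc] at e ⊢; rw [e]
  rw [greenL_iff, greenL_iff, ← Subtype.ext_iff]
  refine and_congr (or_congr Iff.rfl ⟨?_, key x y⟩) (or_congr Iff.rfl ⟨?_, key y x⟩)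
  · rintro ⟨u, h⟩; exact ⟨u, congrArg Subtype.val h⟩
  · rintro ⟨u, h⟩; exact ⟨u, congrArg Subtype.val h⟩

theorem greenR_sub (hreg : ∀ x ∈ R, ∃ y ∈ R, x * y * x = x) (x y : R) :
    greenR x y ↔ greenR (x : T) (y : T) := by
  have key : ∀ x y : R, (∃ u : T, (x : T) = y * u) → ∃ u : R, x = y * u := by
    rintro ⟨x, hx⟩ ⟨y, hy⟩ ⟨u, h⟩
    obtain ⟨y', hy', e⟩ := hreg y hy
    refine ⟨⟨y' * x, R.mul_mem hy' hx⟩, Subtype.ext ?_⟩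
    simp only at h
    change x = y * (y' * x)
    rw [h, ← mul_assoc, ← mul_assoc, e]
  rw [greenR_iff, greenR_iff, ← Subtype.ext_iff]
  refine and_congr (or_congr Iff.rfl ⟨?_, key x y⟩) (or_congr Iff.rfl ⟨?_, key y x⟩)
  · rintro ⟨u, h⟩; exact ⟨u, congrArg Subtype.val h⟩
  · rintro ⟨u, h⟩; exact ⟨u, congrArg Subtype.val h⟩

theorem natLe_sub (hreg : ∀ x ∈ R, ∃ y ∈ R, x * y * x = x) (x y : R) :
    natLe x y ↔ natLe (x : T) (y : T) := by
  constructor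
  · rintro ⟨u, v, h1, h2, h3⟩
    exact ⟨u, v, congrArg Subtype.val h1, congrArg Subtype.val h2, congrArg Subtype.val h3⟩
  · obtain ⟨a, ha⟩ := x
    obtain ⟨b, hb⟩ := y
    rintro ⟨u, v, h1, h2, h3⟩
    simp only at h1 h2 h3
    obtain ⟨b', hb', e⟩ := hreg b hb
    have e1 : a * b' * b = a := by
      rw [h1]; simp only [mul_assoc] at e ⊢; rw [e]
    have e2 : b * (b' * a) = a := by
      rw [h2, ← mul_assoc, ← mul_assoc, e]
    refine ⟨⟨a * b', R.mul_mem ha hb'⟩, ⟨b' * a, R.mul_mem hb' ha⟩, Subtype.ext e1.symm,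
      Subtype.ext e2.symm, Subtype.ext ?_⟩
    change a = a * (b' * a)
    have : a * (b' * a) = a * b' * b * v := by rw [mul_assoc (a * b') b v, ← h2, mul_assoc]
    rw [this, e1, ← h3]

theorem greenJ_sub (hreg : ∀ x ∈ R, ∃ y ∈ R, x * y * x = x)
    (hRTR : ∀ x ∈ R, ∀ z : T, ∀ y ∈ R, x * z * y ∈ R) (x y : R) :
    greenJ x y ↔ greenJ (x : T) (y : T) := by
  have key : ∀ x y : R, (∃ u v : T, (x : T) = u * y * v) → ∃ u v : R, x = u * y * v := by
    rintro ⟨a, ha⟩ ⟨b, hb⟩ ⟨u, v, h⟩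
    simp only at h
    obtain ⟨a', ha', ea⟩ := hreg a ha
    obtain ⟨b', hb', eb⟩ := hreg b hb
    have m1 : a * (a' * u) * b ∈ R := hRTR _ ha _ _ hb
    have m2 : b * (v * a') * a ∈ R := hRTR _ hb _ _ ha
    refine ⟨⟨_, R.mul_mem m1 hb'⟩, ⟨_, R.mul_mem hb' m2⟩, Subtype.ext ?_⟩
    change a = a * (a' * u) * b * b' * b * (b' * (b * (v * a') * a))
    have : a * (a' * u) * b * b' * b * (b' * (b * (v * a') * a))
        = a * a' * (u * (b * b' * b * b' * b) * v) * a' * a := by simp only [mul_assoc]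
    rw [this, eb, eb, ← h, ea, ea]
  have reg1 : ∀ x : R, ∃ x' : R, x * x' * x = x := by
    rintro ⟨a, ha⟩
    obtain ⟨a', ha', ea⟩ := hreg a ha
    exact ⟨⟨a', ha'⟩, Subtype.ext ea⟩
  have reg2 : ∀ x : R, ∃ x' : T, (x : T) * x' * x = x := by
    rintro ⟨a, ha⟩
    obtain ⟨a', ha', ea⟩ := hreg a ha
    exact ⟨a', ea⟩
  rw [greenJ_iff x y (reg1 x) (reg1 y), greenJ_iff (x : T) y (reg2 x) (reg2 y)]
  refine and_congr ⟨?_, key x y⟩ ⟨?_, key y x⟩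
  · rintro ⟨u, v, h⟩; exact ⟨u, v, congrArg Subtype.val h⟩
  · rintro ⟨u, v, h⟩; exact ⟨u, v, congrArg Subtype.val h⟩

theorem greenD_sub (hreg : ∀ x ∈ R, ∃ y ∈ R, x * y * x = x)
    (hRTR : ∀ x ∈ R, ∀ z : T, ∀ y ∈ R, x * z * y ∈ R) (x y : R) :
    greenD x y ↔ greenD (x : T) (y : T) := by
  constructor
  · rintro ⟨c, h1, h2⟩
    exact ⟨c, (greenR_sub R hreg _ _).1 h1, (greenL_sub R hreg _ _).1 h2⟩
  · rintro ⟨c, h1, h2⟩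
    have hc : c ∈ R := by
      rcases ((greenR_iff _ _).1 h1).2 with h | ⟨u, hu⟩
      · rw [← h]; exact x.2
      rcases ((greenL_iff _ _).1 h2).1 with h | ⟨v, hv⟩
      · rw [h]; exact y.2
      obtain ⟨a', ha', ea⟩ := hreg x x.2
      have : c = x * (a' * v) * y := by
        have h3 : (x : T) * (a' * v) * y = x * a' * (v * y) := by simp only [mul_assoc]
        rw [h3, ← hv, hu, ← mul_assoc, ea]
      rw [this]
      exact hRTR _ x.2 _ _ y.2
    exact ⟨⟨c, hc⟩, (greenR_sub R hreg x ⟨c, hc⟩).2 h1, (greenL_sub R hreg ⟨c, hc⟩ y).2 h2⟩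

theorem TS_mem_left {S : Type*} [Semigroup S] (x : S × S × R2) (hx : x ∈ TS S) :
    ∃ a : WithOne S, (x.1 : WithOne S) = a * (x.2.1 : WithOne S) := by
  unfold TS at hx
  induction hx using Subsemigroup.closure_induction with
  | mem x h => exact h.2
  | mul x y _ _ hx hy =>
    obtain ⟨a, ha⟩ := hx
    obtain ⟨t, s, α⟩ := x
    obtain ⟨p, q, β⟩ := y
    refine ⟨a, ?_⟩
    simp only at ha
    cases α <;> simp [sdMul_def, sdMul, ha, mul_assoc]

theorem RTR_mem {S : Type*} [Semigroup S] (hS : IsRegularSemigroup S)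
    (R : Subsemigroup ↥(TS S))
    (hRphi : ∀ s : S, ∃ hs : ((s, s, R2.σ) : S × S × R2) ∈ TS S,
        (⟨(s, s, R2.σ), hs⟩ : ↥(TS S)) ∈ R) :
    ∀ x ∈ R, ∀ z : ↥(TS S), ∀ y ∈ R, x * z * y ∈ R := by
  rintro ⟨⟨t, s, α⟩, hxT⟩ hx ⟨⟨m, n, β⟩, hz⟩ ⟨⟨p, q, γ⟩, hyT⟩ hy
  obtain ⟨k, hk⟩ := TS_mem_left _ hyT
  simp only at hk
  obtain ⟨q', hq⟩ := hS q
  have hp : p * (q' * q) = p := by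
    rw [← WithOne.coe_inj, WithOne.coe_mul, hk, mul_assoc, ← WithOne.coe_mul, ← mul_assoc, hq]
  have hq2 : q * (q' * q) = q := by rw [← mul_assoc, hq]
  have main : ∀ u w : S, w * (q' * q) = w →
      ((t * u * w, s * u * w, γ) : S × S × R2) =
        (t, s, α) * (u * w * q', u * w * q', R2.σ) * (p, q, γ) := by
    intro u w hw
    cases α <;> simp [sdMul_def, sdMul, mul_assoc, hw]
  have main2 : ∃ u w : S, w * (q' * q) = w ∧
      ((t, s, α) * (m, n, β) * (p, q, γ) : S × S × R2) = (t * u * w, s * u * w, γ) := by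
    cases α <;> cases β
    · exact ⟨n, q, hq2, rfl⟩
    · exact ⟨n, p, hp, rfl⟩
    · exact ⟨m, q, hq2, rfl⟩
    · exact ⟨m, p, hp, rfl⟩
  obtain ⟨u, w, hw, e⟩ := main2
  obtain ⟨hs, hR⟩ := hRphi (u * w * q')
  have := R.mul_mem (R.mul_mem hx hR) hy
  convert this using 1
  exact Subtype.ext (e.trans (main u w hw))

end Helpers

/-- for a regular subsemigroup `R` of `T(S)` containing the image of
the embedding `φ : s ↦ (s,s,σ)`, the Green relations and the natural partial order of `R`
are the restrictions to `R` of those of `T(S)`. -/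
theorem statement_17 {S : Type*} [Semigroup S] (hS : IsRegularSemigroup S)
    (R : Subsemigroup ↥(TS S))
    (hRreg : ∀ x ∈ R, ∃ y ∈ R, x * y * x = x)
    (hRphi : ∀ s : S, ∃ hs : ((s, s, R2.σ) : S × S × R2) ∈ TS S,
        (⟨(s, s, R2.σ), hs⟩ : ↥(TS S)) ∈ R) :
    ∀ x y : ↥R,
      (greenH x y ↔ greenH (x : ↥(TS S)) (y : ↥(TS S))) ∧
      (greenL x y ↔ greenL (x : ↥(TS S)) (y : ↥(TS S))) ∧
      (greenR x y ↔ greenR (x : ↥(TS S)) (y : ↥(TS S))) ∧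
      (greenD x y ↔ greenD (x : ↥(TS S)) (y : ↥(TS S))) ∧
      (greenJ x y ↔ greenJ (x : ↥(TS S)) (y : ↥(TS S))) ∧
      (natLe x y ↔ natLe (x : ↥(TS S)) (y : ↥(TS S))) := by
  have hRTR := RTR_mem hS R hRphi
  intro x y
  exact ⟨and_congr (greenL_sub R hRreg x y) (greenR_sub R hRreg x y), greenL_sub R hRreg x y,
    greenR_sub R hRreg x y, greenD_sub R hRreg hRTR x y, greenJ_sub R hRreg hRTR x y,
    natLe_sub R hRreg x y⟩

end SemibandEmbed
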